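/- For any fixed real α > 0, the function s(φ) := Θ_{1/α}(φ)^α · Θ_α(φ) is strictly increasing on the interval (0, π), and moreover s(φ) → 0 as φ → 0⁺ and s(φ) → 1 as φ → π⁻. Consequently, for each fixed θ ∈ (0, π), the equation Θ_{1/α}(φ)^α · Θ_α(φ) = Θ_{1/α}(θ)^α · Θ_α(θ) has the unique solution φ = θ in (0, π). -/

import Mathlib

open Real Filter Set Topology

/-- `Th α t = sin t / ((1+α)·sin((π−t)/(1+α)))`. -/
noncomputable def Th (α t : ℝ) : ℝ :=
  Real.sin t / ((1 + α) * Real.sin ((Real.pi - t) / (1 + α)))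

/-- `sfun α φ = Θ_{1/α}(φ)^α · Θ_α(φ)`. -/
noncomputable def sfun (α φ : ℝ) : ℝ := (Th (1/α) φ) ^ α * Th α φ

lemma aux_neg (c : ℝ) (hc : 0 < c) (hc1 : c < 1) (x : ℝ) (hx : x ∈ Set.Ioo 0 Real.pi) :
    Real.cos x * Real.sin (c * x) - c * Real.sin x * Real.cos (c * x) < 0 := by
  have hd : ∀ y : ℝ, HasDerivAt
      (fun x => Real.cos x * Real.sin (c * x) - c * Real.sin x * Real.cos (c * x))
      (-((1 - c ^ 2) * (Real.sin y * Real.sin (c * y)))) y := by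
    intro y
    have h1 : HasDerivAt (fun x : ℝ => c * x) c y := by
      simpa using (hasDerivAt_id y).const_mul c
    have h := ((Real.hasDerivAt_cos y).mul h1.sin).sub
      (((Real.hasDerivAt_sin y).const_mul c).mul h1.cos)
    refine h.congr_deriv ?_
    ring
  have hanti : StrictAntiOn
      (fun x => Real.cos x * Real.sin (c * x) - c * Real.sin x * Real.cos (c * x))
      (Set.Icc 0 Real.pi) := by
    refine strictAntiOn_of_deriv_neg (convex_Icc _ _) (by fun_prop) ?_
    intro y hy
    rw [interior_Icc] at hy
    rw [(hd y).deriv]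
    have h1 : 0 < Real.sin y := Real.sin_pos_of_pos_of_lt_pi hy.1 hy.2
    have h2 : 0 < Real.sin (c * y) :=
      Real.sin_pos_of_pos_of_lt_pi (mul_pos hc hy.1) (by nlinarith [hy.1, hy.2])
    have h3 : 0 < 1 - c ^ 2 := by nlinarith
    have := mul_pos h3 (mul_pos h1 h2)
    linarith
  have := hanti (Set.left_mem_Icc.2 Real.pi_pos.le) (Set.Ioo_subset_Icc_self hx) hx.1
  simpa using this

lemma aux_anti (c : ℝ) (hc : 0 < c) (hc1 : c < 1) :
    StrictAntiOn (fun x => Real.sin x / Real.sin (c * x)) (Set.Ioo 0 Real.pi) := by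
  have hs : ∀ y ∈ Set.Ioo 0 Real.pi, 0 < Real.sin (c * y) := fun y hy =>
      Real.sin_pos_of_pos_of_lt_pi (mul_pos hc hy.1) (by nlinarith [hy.1, hy.2])
  have hd : ∀ y ∈ Set.Ioo 0 Real.pi, HasDerivAt (fun x => Real.sin x / Real.sin (c * x))
      ((Real.cos y * Real.sin (c * y) - c * Real.sin y * Real.cos (c * y))
        / Real.sin (c * y) ^ 2) y := by
    intro y hy
    have h1 : HasDerivAt (fun x : ℝ => c * x) c y := by
      simpa using (hasDerivAt_id y).const_mul c
    have h := (Real.hasDerivAt_sin y).div h1.sin (hs y hy).ne'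
    refine h.congr_deriv ?_
    ring
  refine strictAntiOn_of_deriv_neg (convex_Ioo _ _)
    (fun y hy => (hd y hy).continuousAt.continuousWithinAt) ?_
  intro y hy
  rw [interior_Ioo] at hy
  rw [(hd y hy).deriv]
  exact div_neg_of_neg_of_pos (aux_neg c hc hc1 y hy) (pow_pos (hs y hy) 2)

lemma Th_eq (α t : ℝ) : Th α t = (1 + α)⁻¹ *
    (Real.sin (Real.pi - t) / Real.sin ((1 + α)⁻¹ * (Real.pi - t))) := by
  unfold Th
  rw [Real.sin_pi_sub, div_eq_inv_mul (Real.pi - t), div_eq_mul_inv, div_eq_mul_inv, mul_inv]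
  ring

lemma Th_pos (α : ℝ) (hα : 0 < α) (t : ℝ) (ht : t ∈ Set.Ioo 0 Real.pi) : 0 < Th α t := by
  have h1 : 0 < Real.sin t := Real.sin_pos_of_pos_of_lt_pi ht.1 ht.2
  have h2 : 0 < Real.sin ((Real.pi - t) / (1 + α)) := by
    apply Real.sin_pos_of_pos_of_lt_pi
    · exact div_pos (by linarith [ht.2]) (by linarith)
    · rw [div_lt_iff₀ (by linarith)]
      nlinarith [ht.1, Real.pi_pos]
  unfold Th
  positivity

lemma Th_mono (α : ℝ) (hα : 0 < α) : StrictMonoOn (Th α) (Set.Ioo 0 Real.pi) := by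
  intro a ha b hb hab
  have hc : 0 < (1 + α)⁻¹ := by positivity
  have hc1 : (1 + α)⁻¹ < 1 := inv_lt_one_of_one_lt₀ (by linarith)
  rw [Th_eq, Th_eq]
  refine mul_lt_mul_of_pos_left ?_ hc
  exact aux_anti _ hc hc1 (a := Real.pi - b) (b := Real.pi - a)
    ⟨by linarith [hb.2], by linarith [hb.1]⟩ ⟨by linarith [ha.2], by linarith [ha.1]⟩
    (by linarith)

lemma Th_lim0 (α : ℝ) (hα : 0 < α) : Tendsto (Th α) (𝓝[>] (0:ℝ)) (𝓝 0) := by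
  have h2 : 0 < Real.sin ((Real.pi - 0) / (1 + α)) := by
    apply Real.sin_pos_of_pos_of_lt_pi
    · exact div_pos (by linarith [Real.pi_pos]) (by linarith)
    · rw [div_lt_iff₀ (by linarith)]
      nlinarith [Real.pi_pos]
  have : ContinuousAt (Th α) 0 := by
    unfold Th
    refine ContinuousAt.div (by fun_prop) (by fun_prop) ?_
    positivity
  have h := this.tendsto
  have h0 : Th α 0 = 0 := by simp [Th]
  rw [h0] at h
  exact h.mono_left nhdsWithin_le_nhds

lemma Th_lim1 (α : ℝ) (hα : 0 < α) : Tendsto (Th α) (𝓝[<] Real.pi) (𝓝 1) := by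
  have hcont : ContinuousAt
      (fun t => Real.sinc (Real.pi - t) / Real.sinc ((Real.pi - t) / (1 + α))) Real.pi := by
    have hs := Real.continuous_sinc
    refine ContinuousAt.div ?_ ?_ (by simp)
    · exact (hs.comp (by fun_prop : Continuous fun t : ℝ => Real.pi - t)).continuousAt
    · exact (hs.comp (by fun_prop : Continuous fun t : ℝ => (Real.pi - t) / (1 + α))).continuousAt
  have h := hcont.tendsto
  simp only [sub_self, zero_div, Real.sinc_zero, div_one] at h
  refine (h.mono_left nhdsWithin_le_nhds).congr' ?_
  filter_upwards [self_mem_nhdsWithin] with t ht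
  have hx : Real.pi - t ≠ 0 := (sub_pos.2 ht).ne'
  have ha : 1 + α ≠ 0 := by positivity
  rw [Real.sinc_of_ne_zero hx, Real.sinc_of_ne_zero (div_ne_zero hx ha), Real.sin_pi_sub]
  unfold Th
  generalize Real.sin ((Real.pi - t) / (1 + α)) = S
  by_cases hS : S = 0
  · simp [hS]
  · field_simp

lemma sfun_mono (α : ℝ) (hα : 0 < α) : StrictMonoOn (sfun α) (Set.Ioo 0 Real.pi) := by
  intro a ha b hb hab
  have hi : 0 < 1 / α := by positivity
  unfold sfun
  exact mul_lt_mul'' (Real.rpow_lt_rpow (Th_pos _ hi a ha).le (Th_mono _ hi ha hb hab) hα)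
    (Th_mono _ hα ha hb hab) (Real.rpow_nonneg (Th_pos _ hi a ha).le _) (Th_pos _ hα a ha).le

theorem stmt4 (α : ℝ) (hα : 0 < α) :
    StrictMonoOn (sfun α) (Set.Ioo 0 Real.pi) ∧
    Tendsto (sfun α) (𝓝[>] (0:ℝ)) (𝓝 0) ∧
    Tendsto (sfun α) (𝓝[<] Real.pi) (𝓝 1) ∧
    ∀ θ ∈ Set.Ioo 0 Real.pi, ∀ φ ∈ Set.Ioo 0 Real.pi,
      ((Th (1/α) φ) ^ α * Th α φ = (Th (1/α) θ) ^ α * Th α θ ↔ φ = θ) := by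
  have hi : 0 < 1 / α := by positivity
  refine ⟨sfun_mono α hα, ?_, ?_, ?_⟩
  · have := ((Th_lim0 _ hi).rpow_const (p := α) (Or.inr hα.le)).mul (Th_lim0 α hα)
    simpa [show sfun α = fun x => (Th (1/α) x) ^ α * Th α x from rfl] using this
  · have := ((Th_lim1 _ hi).rpow_const (p := α) (Or.inr hα.le)).mul (Th_lim1 α hα)
    simpa [show sfun α = fun x => (Th (1/α) x) ^ α * Th α x from rfl] using this
  · intro θ hθ φ hφ
    exact (sfun_mono α hα).injOn.eq_iff hφ hθ
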